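/- Let $d \in \mathbb{N}$ with $d \ge 1$, and let $c_0, c_1, M, \bar\varepsilon, \eta > 0$. Then there exists $K > 0$, depending only on $d, c_0, c_1, M, \bar\varepsilon, \eta$, such that the following holds. Let $\hat m \in \mathbb{R}^d$ with $\|\hat m\|_\infty \le M$, let $\hat C$ be a symmetric positive definite $d \times d$ matrix such that the entries of $\hat C$ and of $\hat C^{-1}$ are bounded by $M$ in absolute value and $$\lambda_{\min}(\hat C^{-1}) \ge 2 \bar\varepsilon c_0 + \eta,$$ where $\lambda_{\min}$ denotes the smallest eigenvalue. Let $Q(x) = \tfrac12 (x-\hat m)^T \hat C^{-1} (x-\hat m)$, and let $H : \mathbb{R}^d \to \mathbb{R}$ be measurable with $|H(x)| \le c_0 x^T x + c_1$ for all $x$. Then for every $\varepsilon \in [0, \bar\varepsilon]$ the density $p(x) = \exp(-Q(x) - \varepsilon H(x)) / \hat Z$ with $\hat Z = \int_{\mathbb{R}^d} \exp(-Q(x) - \varepsilon H(x))\,dx$ is well defined (that is, $0 < \hat Z < \infty$), it has finite first and second moments, and $$\Big\| \int x\, p(x)\, dx - \hat m \Big\|_\infty \le K \varepsilon, \qquad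 \Big\| \int x x^T p(x)\, dx - (\hat C + \hat m \hat m^T) \Big\|_\infty \le K \varepsilon,$$ where $\|\cdot\|_\infty$ denotes the maximum absolute value of the entries of a vector or matrix. -/

import Mathlib

open Matrix MeasureTheory

noncomputable section

namespace PerturbedGaussian

variable {d : ℕ}

/-- The smallest eigenvalue of a real symmetric matrix: the infimum of its (finite, and for
`d ≥ 1` nonempty) set of eigenvalues. -/
def lambdaMin (A : Matrix (Fin d) (Fin d) ℝ) : ℝ :=
  sInf (spectrum ℝ A)

/-- `Q(x) = ½ (x - m)ᵀ C⁻¹ (x - m)`. -/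
def quad (m : Fin d → ℝ) (C : Matrix (Fin d) (Fin d) ℝ) (x : Fin d → ℝ) : ℝ :=
  (1 / 2 : ℝ) * ((x - m) ⬝ᵥ (C⁻¹ *ᵥ (x - m)))

/-- The unnormalized density `exp(-Q(x) - ε H(x))`. -/
def weight (m : Fin d → ℝ) (C : Matrix (Fin d) (Fin d) ℝ) (H : (Fin d → ℝ) → ℝ) (ε : ℝ)
    (x : Fin d → ℝ) : ℝ :=
  Real.exp (-quad m C x - ε * H x)

/-- The normalization constant `∫ exp(-Q - ε H)`. -/
def normConst (m : Fin d → ℝ) (C : Matrix (Fin d) (Fin d) ℝ) (H : (Fin d → ℝ) → ℝ) (ε : ℝ) : ℝ :=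
  ∫ x : Fin d → ℝ, weight m C H ε x

/-- The density `p(x) = exp(-Q(x) - ε H(x)) / Z`. -/
def density (m : Fin d → ℝ) (C : Matrix (Fin d) (Fin d) ℝ) (H : (Fin d → ℝ) → ℝ) (ε : ℝ)
    (x : Fin d → ℝ) : ℝ :=
  weight m C H ε x / normConst m C H ε

end PerturbedGaussian

end

/-! Write `Z₀ = ∫ exp (-Q)`. Rescaling `x - m` by `√θ` gives `∫ exp (-θQ) = θ ^ (-d / 2) * Z₀`. By
the spectral gap and Young's inequality `ε|H| ≤ B + τQ` with `τ < 1`, so `exp (-Q - εH)` lies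
between multiples of `exp (-(1 + τ)Q)` and `exp (-(1 - τ)Q)`, and it differs from `exp (-Q)` by at
most `ε|H|` times such a multiple of `exp (-(1 - τ)Q)`. For an observable of growth `1 + Q`, the
error in the numerator of its expectation is therefore `O(ε) * Z₀`, while the normalization is at
least a multiple of `Z₀`: the factor `Z₀`, and with it the determinant of `C`, cancels. The moments
of the Gaussian itself come from integration by parts along the columns of `C`.
-/

namespace PerturbedGaussian

section CoordinateBounds

variable {ι : Type*} [Fintype ι]

theorem dotProduct_self_nonneg (y : ι → ℝ) : 0 ≤ y ⬝ᵥ y := by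
  simpa only [star_trivial] using dotProduct_star_self_nonneg y

theorem sq_apply_le_dotProduct_self (y : ι → ℝ) (i : ι) : y i ^ 2 ≤ y ⬝ᵥ y := by
  rw [sq]
  exact Finset.single_le_sum (f := fun i => y i * y i) (fun i _ => mul_self_nonneg (y i))
    (Finset.mem_univ i)

theorem abs_apply_le_one_add_dotProduct_self (y : ι → ℝ) (i : ι) : |y i| ≤ 1 + y ⬝ᵥ y := by
  have h := sq_apply_le_dotProduct_self y i
  rw [← sq_abs] at h
  nlinarith [sq_nonneg (|y i| - 1)]

theorem abs_apply_mul_apply_le_dotProduct_self (y : ι → ℝ) (i j : ι) :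
    |y i * y j| ≤ y ⬝ᵥ y := by
  have hi := sq_apply_le_dotProduct_self y i
  have hj := sq_apply_le_dotProduct_self y j
  rw [← sq_abs] at hi hj
  rw [abs_mul]
  linarith [two_mul_le_add_sq |y i| |y j|]

theorem dotProduct_self_le_card_mul_sq {y : ι → ℝ} {R : ℝ} (h : ∀ i, |y i| ≤ R) :
    y ⬝ᵥ y ≤ Fintype.card ι * R ^ 2 := by
  have hsq : ∀ i ∈ Finset.univ, y i * y i ≤ R ^ 2 := fun i _ => by
    rw [← sq]
    exact sq_le_sq' (abs_le.mp (h i)).1 (abs_le.mp (h i)).2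
  simpa [dotProduct] using Finset.sum_le_card_nsmul _ _ _ hsq

theorem dotProduct_self_add_le (y m : ι → ℝ) {δ : ℝ} (hδ : 0 < δ) :
    (y + m) ⬝ᵥ (y + m) ≤ (1 + δ) * (y ⬝ᵥ y) + (1 + δ⁻¹) * (m ⬝ᵥ m) := by
  have hsq : (1 + δ) * (y ⬝ᵥ y) + (1 + δ⁻¹) * (m ⬝ᵥ m) - (y + m) ⬝ᵥ (y + m)
      = δ⁻¹ * ((δ • y - m) ⬝ᵥ (δ • y - m)) := by
    simp only [add_dotProduct, dotProduct_add, sub_dotProduct, dotProduct_sub, smul_dotProduct,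
      dotProduct_smul, smul_eq_mul, dotProduct_comm m y]
    field_simp
    ring
  have := mul_nonneg (inv_nonneg.mpr hδ.le) (dotProduct_self_nonneg (δ • y - m))
  linarith

end CoordinateBounds

section Coercivity

open scoped MatrixOrder in
theorem mul_dotProduct_self_le_of_le_spectrum {ι : Type*} [Fintype ι] [DecidableEq ι]
    {A : Matrix ι ι ℝ} (hA : A.IsHermitian) {b : ℝ} (hb : ∀ r ∈ spectrum ℝ A, b ≤ r)
    (y : ι → ℝ) : b * (y ⬝ᵥ y) ≤ y ⬝ᵥ (A *ᵥ y) := by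
  have hle : algebraMap ℝ (Matrix ι ι ℝ) b ≤ A :=
    (algebraMap_le_iff_le_spectrum (ha := hA)).mpr hb
  have h := (Matrix.le_iff.mp hle).dotProduct_mulVec_nonneg y
  rw [sub_mulVec, dotProduct_sub, Algebra.algebraMap_eq_smul_one, smul_mulVec, one_mulVec,
    dotProduct_smul, star_trivial, smul_eq_mul] at h
  linarith

theorem lambdaMin_mul_dotProduct_self_le {d : ℕ} {A : Matrix (Fin d) (Fin d) ℝ}
    (hA : A.IsHermitian) (y : Fin d → ℝ) : lambdaMin A * (y ⬝ᵥ y) ≤ y ⬝ᵥ (A *ᵥ y) :=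
  mul_dotProduct_self_le_of_le_spectrum hA
    (fun _ hr => csInf_le A.finite_spectrum.bddBelow hr) y

open scoped MatrixOrder in
theorem exists_pos_mul_dotProduct_self_le {ι : Type*} [Fintype ι] {A : Matrix ι ι ℝ}
    (hA : A.PosDef) : ∃ b > 0, ∀ y : ι → ℝ, b * (y ⬝ᵥ y) ≤ y ⬝ᵥ (A *ᵥ y) := by
  classical
  have hpos : ∀ r ∈ spectrum ℝ A, 0 < r := fun _ hr => hA.isStrictlyPositive.spectrum_pos hr
  have hev : ∀ᶠ b in nhdsWithin (0 : ℝ) (Set.Ioi 0), ∀ r ∈ spectrum ℝ A, b ≤ r :=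
    (Filter.eventually_all_finite A.finite_spectrum).mpr fun r hr =>
      Filter.mem_of_superset (Ioo_mem_nhdsGT (hpos r hr)) fun _ hb => hb.2.le
  obtain ⟨b, hbA, hb⟩ := (hev.and self_mem_nhdsWithin).exists
  exact ⟨b, hb, mul_dotProduct_self_le_of_le_spectrum hA.isHermitian hbA⟩

end Coercivity

section Quad

variable {d : ℕ} {m : Fin d → ℝ} {C : Matrix (Fin d) (Fin d) ℝ}

theorem continuous_quad : Continuous (quad m C) := by
  unfold quad; fun_prop

theorem quad_nonneg (hC : C.PosDef) (x : Fin d → ℝ) : 0 ≤ quad m C x :=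
  mul_nonneg (by norm_num) (hC.inv.posSemidef.dotProduct_mulVec_nonneg (x - m))

theorem quad_add_smul (x : Fin d → ℝ) (r : ℝ) (v : Fin d → ℝ) (hC : C.IsSymm) :
    quad m C (x + r • v) =
      quad m C x + r * ((x - m) ⬝ᵥ (C⁻¹ *ᵥ v)) + r ^ 2 * quad 0 C v := by
  have hcross : v ⬝ᵥ (C⁻¹ *ᵥ (x - m)) = (x - m) ⬝ᵥ (C⁻¹ *ᵥ v) := by
    rw [dotProduct_comm, ← vecMul_transpose, transpose_nonsing_inv, hC.eq, dotProduct_mulVec]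
  simp only [quad, sub_zero, add_sub_right_comm x (r • v) m, mulVec_add, mulVec_smul,
    add_dotProduct, dotProduct_add, smul_dotProduct, dotProduct_smul, smul_eq_mul, hcross]
  ring

theorem half_mul_dotProduct_self_le_quad {b : ℝ}
    (hb : ∀ y : Fin d → ℝ, b * (y ⬝ᵥ y) ≤ y ⬝ᵥ (C⁻¹ *ᵥ y)) (x : Fin d → ℝ) :
    b / 2 * ((x - m) ⬝ᵥ (x - m)) ≤ quad m C x := by
  have := hb (x - m)
  unfold quad
  linarith

theorem integrable_exp_neg_mul_dotProduct_self {ι : Type*} [Fintype ι] {b : ℝ} (hb : 0 < b) :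
    Integrable fun y : ι → ℝ => Real.exp (-(b * (y ⬝ᵥ y))) := by
  have h := Integrable.fintype_prod (ι := ι) (f := fun _ t => Real.exp (-b * t ^ 2))
    (μ := fun _ => (volume : Measure ℝ)) fun _ => integrable_exp_neg_mul_sq hb
  refine h.congr (ae_of_all _ fun y => ?_)
  simp only [← Real.exp_sum, dotProduct, ← sq, neg_mul, Finset.sum_neg_distrib, Finset.mul_sum]

theorem integrable_exp_neg_mul_quad (hC : C.PosDef) {θ : ℝ} (hθ : 0 < θ) :
    Integrable fun x => Real.exp (-(θ * quad m C x)) := by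
  obtain ⟨b, hb, hbC⟩ := exists_pos_mul_dotProduct_self_le hC.inv
  refine ((integrable_exp_neg_mul_dotProduct_self
    (b := θ * (b / 2)) (by positivity)).comp_sub_right m).mono'
    (Real.continuous_exp.comp
      (continuous_quad.const_mul θ).neg).aestronglyMeasurable (ae_of_all _ fun x => ?_)
  rw [Real.norm_eq_abs, Real.abs_exp, mul_assoc θ]
  gcongr
  exact half_mul_dotProduct_self_le_quad hbC x

theorem integral_exp_neg_mul_quad {θ : ℝ} (hθ : 0 < θ) :
    ∫ x, Real.exp (-(θ * quad m C x)) = (√θ ^ d)⁻¹ * ∫ x, Real.exp (-quad m C x) := by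
  have hscale : ∀ y, θ * quad 0 C y = quad 0 C (√θ • y) := fun y => by
    simp only [quad, sub_zero, mulVec_smul, dotProduct_smul, smul_dotProduct, smul_eq_mul]
    linear_combination (1 / 2 * (y ⬝ᵥ (C⁻¹ *ᵥ y))) * (Real.mul_self_sqrt hθ.le).symm
  have hshift : ∀ f : ℝ → ℝ, ∫ x, f (quad m C x) = ∫ y, f (quad 0 C y) := fun f => by
    simpa only [quad, sub_zero] using
      integral_sub_right_eq_self (μ := volume) (fun y => f (quad 0 C y)) m
  rw [hshift fun q => Real.exp (-(θ * q)), hshift fun q => Real.exp (-q)]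
  simp only [hscale]
  rw [Measure.integral_comp_smul volume (fun y => Real.exp (-quad 0 C y)), Module.finrank_fin_fun,
    abs_of_nonneg (by positivity), smul_eq_mul]

theorem one_add_pow_mul_exp_neg_le {θ s : ℝ} (hθ : 0 < θ) (hs : 0 ≤ s) (n : ℕ) :
    (1 + s) ^ n * Real.exp (-(θ * s)) ≤
      n.factorial * (2 / θ) ^ n * Real.exp (θ / 2) * Real.exp (-(θ / 2 * s)) := by
  have hexp := Real.pow_div_factorial_le_exp (θ / 2 * (1 + s)) (by positivity) n
  have hpow : (1 + s) ^ n = n.factorial * (2 / θ) ^ n * ((θ / 2 * (1 + s)) ^ n / n.factorial) := by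
    have hbase : 1 + s = 2 / θ * (θ / 2 * (1 + s)) := by field_simp
    rw [mul_assoc, mul_div_assoc', ← mul_pow, ← hbase]
    field_simp
  calc (1 + s) ^ n * Real.exp (-(θ * s))
      ≤ n.factorial * (2 / θ) ^ n * Real.exp (θ / 2 * (1 + s)) * Real.exp (-(θ * s)) := by
        rw [hpow]; gcongr
    _ = n.factorial * (2 / θ) ^ n * Real.exp (θ / 2) * Real.exp (-(θ / 2 * s)) := by
        rw [mul_assoc, mul_assoc _ (Real.exp _), ← Real.exp_add, ← Real.exp_add]; ring_nf

theorem integrable_one_add_quad_pow_mul_exp (hC : C.PosDef) {θ : ℝ} (hθ : 0 < θ) (n : ℕ) :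
    Integrable fun x => (1 + quad m C x) ^ n * Real.exp (-(θ * quad m C x)) := by
  have hcont : Continuous fun x => (1 + quad m C x) ^ n * Real.exp (-(θ * quad m C x)) := by
    have := continuous_quad (m := m) (C := C)
    fun_prop
  refine ((integrable_exp_neg_mul_quad (m := m) hC (half_pos hθ)).const_mul
    (n.factorial * (2 / θ) ^ n * Real.exp (θ / 2))).mono' hcont.aestronglyMeasurable
    (ae_of_all _ fun x => ?_)
  have hq := quad_nonneg (m := m) hC x
  rw [Real.norm_of_nonneg (by positivity)]
  exact one_add_pow_mul_exp_neg_le hθ hq n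

theorem integral_one_add_quad_pow_mul_exp_le (hC : C.PosDef) {θ : ℝ} (hθ : 0 < θ) (n : ℕ) :
    ∫ x, (1 + quad m C x) ^ n * Real.exp (-(θ * quad m C x)) ≤
      n.factorial * (2 / θ) ^ n * Real.exp (θ / 2) * (√(θ / 2) ^ d)⁻¹ *
        ∫ x, Real.exp (-quad m C x) := by
  rw [mul_assoc _ (√(θ / 2) ^ d)⁻¹, ← integral_exp_neg_mul_quad (half_pos hθ),
    ← integral_const_mul]
  exact integral_mono (integrable_one_add_quad_pow_mul_exp hC hθ n)
    ((integrable_exp_neg_mul_quad hC (half_pos hθ)).const_mul _)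
    fun x => one_add_pow_mul_exp_neg_le hθ (quad_nonneg hC x) n

end Quad

section GaussianMoments

variable {d : ℕ} {m : Fin d → ℝ} {C : Matrix (Fin d) (Fin d) ℝ}

theorem one_add_dotProduct_self_le {b : ℝ} (hb : 0 < b)
    (hbC : ∀ y : Fin d → ℝ, b * (y ⬝ᵥ y) ≤ y ⬝ᵥ (C⁻¹ *ᵥ y)) (x : Fin d → ℝ) :
    1 + (x - m) ⬝ᵥ (x - m) ≤ (1 + 2 / b) * (1 + quad m C x) := by
  have hq := half_mul_dotProduct_self_le_quad (m := m) hbC x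
  have hN := dotProduct_self_nonneg (x - m)
  have hNq : (x - m) ⬝ᵥ (x - m) ≤ 2 / b * quad m C x := by
    rw [div_mul_eq_mul_div, le_div_iff₀ hb]
    linarith
  have : 0 ≤ quad m C x := le_trans (by positivity) hq
  have : 0 < 2 / b := by positivity
  linarith

theorem abs_sub_apply_le {b : ℝ} (hb : 0 < b)
    (hbC : ∀ y : Fin d → ℝ, b * (y ⬝ᵥ y) ≤ y ⬝ᵥ (C⁻¹ *ᵥ y)) (x : Fin d → ℝ) (i : Fin d) :
    |x i - m i| ≤ (1 + 2 / b) * (1 + quad m C x) :=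
  (abs_apply_le_one_add_dotProduct_self (x - m) i).trans (one_add_dotProduct_self_le hb hbC x)

theorem abs_sub_apply_mul_sub_apply_le {b : ℝ} (hb : 0 < b)
    (hbC : ∀ y : Fin d → ℝ, b * (y ⬝ᵥ y) ≤ y ⬝ᵥ (C⁻¹ *ᵥ y)) (x : Fin d → ℝ) (i j : Fin d) :
    |(x i - m i) * (x j - m j)| ≤ (1 + 2 / b) * (1 + quad m C x) :=
  calc |(x i - m i) * (x j - m j)| ≤ (x - m) ⬝ᵥ (x - m) :=
        abs_apply_mul_apply_le_dotProduct_self (x - m) i j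
    _ ≤ (1 + 2 / b) * (1 + quad m C x) := by
        linarith [one_add_dotProduct_self_le (m := m) hb hbC x]

theorem integrable_mul_exp_neg_quad (hC : C.PosDef) {f : (Fin d → ℝ) → ℝ} (hf : Continuous f)
    {D : ℝ} {n : ℕ} (hfD : ∀ x, |f x| ≤ D * (1 + quad m C x) ^ n) :
    Integrable fun x => f x * Real.exp (-quad m C x) := by
  refine ((integrable_one_add_quad_pow_mul_exp (m := m) hC one_pos n).const_mul D).mono'
    (hf.mul (Real.continuous_exp.comp continuous_quad.neg)).aestronglyMeasurable
    (ae_of_all _ fun x => ?_)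
  rw [Real.norm_eq_abs, abs_mul, Real.abs_exp, one_mul, ← mul_assoc]
  gcongr
  exact hfD x

theorem integrable_exp_neg_quad (hC : C.PosDef) :
    Integrable fun x => Real.exp (-quad m C x) := by
  simpa only [one_mul] using integrable_exp_neg_mul_quad (m := m) hC one_pos

theorem integral_exp_neg_quad_pos (hC : C.PosDef) : 0 < ∫ x, Real.exp (-quad m C x) :=
  integral_exp_pos (integrable_exp_neg_quad hC)

theorem integrable_sub_apply_mul_exp_neg_quad (hC : C.PosDef) (i : Fin d) :
    Integrable fun x => (x i - m i) * Real.exp (-quad m C x) := by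
  obtain ⟨b, hb, hbC⟩ := exists_pos_mul_dotProduct_self_le hC.inv
  refine integrable_mul_exp_neg_quad hC (D := 1 + 2 / b) (n := 1) (by fun_prop) fun x => ?_
  simpa only [pow_one] using abs_sub_apply_le hb hbC x i

theorem integrable_sub_apply_mul_sub_apply_mul_exp_neg_quad (hC : C.PosDef) (i j : Fin d) :
    Integrable fun x => (x i - m i) * (x j - m j) * Real.exp (-quad m C x) := by
  obtain ⟨b, hb, hbC⟩ := exists_pos_mul_dotProduct_self_le hC.inv
  refine integrable_mul_exp_neg_quad hC (D := 1 + 2 / b) (n := 1) (by fun_prop) fun x => ?_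
  simpa only [pow_one] using abs_sub_apply_mul_sub_apply_le hb hbC x i j

-- Along the `j`-th column of `C` the gradient `C⁻¹ (x - m)` of the exponent is just `x j - m j`.
theorem hasLineDerivAt_exp_neg_quad (hC : C.PosDef) (x : Fin d → ℝ) (j : Fin d) :
    HasLineDerivAt ℝ (fun x => Real.exp (-quad m C x))
      (-((x j - m j) * Real.exp (-quad m C x))) x (C.col j) := by
  have hsymm : C.IsSymm := isHermitian_iff_isSymm.mp hC.isHermitian
  have hcol : (x - m) ⬝ᵥ (C⁻¹ *ᵥ C.col j) = x j - m j := by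
    rw [← mulVec_single_one, mulVec_mulVec, nonsing_inv_mul _ hC.det_pos.ne'.isUnit, one_mulVec,
      dotProduct_single_one, Pi.sub_apply]
  have hline : (fun r : ℝ => quad m C (x + r • C.col j)) =
      fun r => quad m C x + r * (x j - m j) + r ^ 2 * quad 0 C (C.col j) :=
    funext fun r => by rw [quad_add_smul x r _ hsymm, hcol]
  have hquad : HasDerivAt (fun r : ℝ => quad m C (x + r • C.col j)) (x j - m j) 0 := by
    rw [hline]
    simpa using (((hasDerivAt_id (0 : ℝ)).mul_const (x j - m j)).const_add (quad m C x)).fun_add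
      ((hasDerivAt_pow 2 (0 : ℝ)).mul_const (quad 0 C (C.col j)))
  simpa [HasLineDerivAt, neg_sub, ← neg_mul, mul_comm] using hquad.fun_neg.exp

/-- Stein's identity. -/
theorem integral_mul_sub_apply_mul_exp_neg_quad (hC : C.PosDef) {f f' : (Fin d → ℝ) → ℝ}
    {j : Fin d} (hf : ∀ x, HasLineDerivAt ℝ f (f' x) x (C.col j))
    (hfg : Integrable fun x => f x * Real.exp (-quad m C x))
    (hf'g : Integrable fun x => f' x * Real.exp (-quad m C x))
    (hfjg : Integrable fun x => f x * (x j - m j) * Real.exp (-quad m C x)) :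
    ∫ x, f x * (x j - m j) * Real.exp (-quad m C x) =
      ∫ x, f' x * Real.exp (-quad m C x) := by
  have h := integral_bilinear_hasLineDerivAt_right_eq_neg_left_of_integrable
    (μ := volume) (B := ContinuousLinearMap.mul ℝ ℝ) hf'g
    (by simpa only [ContinuousLinearMap.mul_apply', mul_neg, ← mul_assoc] using hfjg.fun_neg)
    hfg (fun x _ => hf x) (fun x _ => hasLineDerivAt_exp_neg_quad hC x j)
  simpa only [ContinuousLinearMap.mul_apply', mul_neg, integral_neg, neg_inj, ← mul_assoc] using h

theorem integral_sub_apply_mul_exp_neg_quad (hC : C.PosDef) (i : Fin d) :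
    ∫ x, (x i - m i) * Real.exp (-quad m C x) = 0 := by
  have h := integral_mul_sub_apply_mul_exp_neg_quad (m := m) (f := fun _ => 1) (f' := fun _ => 0)
    (j := i) hC (fun _ => hasDerivAt_const (0 : ℝ) (1 : ℝ))
    (by simpa only [one_mul] using integrable_exp_neg_quad hC)
    (by simp)
    (by simpa only [one_mul] using integrable_sub_apply_mul_exp_neg_quad hC i)
  simpa only [one_mul, zero_mul, integral_zero] using h

theorem integral_sub_apply_mul_sub_apply_mul_exp_neg_quad (hC : C.PosDef) (i j : Fin d) :
    ∫ x, (x i - m i) * (x j - m j) * Real.exp (-quad m C x) =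
      C i j * ∫ x, Real.exp (-quad m C x) := by
  have hderiv : ∀ x, HasLineDerivAt ℝ (fun x : Fin d → ℝ => x i - m i) (C i j) x (C.col j) :=
    fun x => by
      have h := ((hasDerivAt_id (0 : ℝ)).mul_const (C i j)).const_add (x i) |>.sub_const (m i)
      simpa [HasLineDerivAt] using h
  rw [integral_mul_sub_apply_mul_exp_neg_quad hC hderiv
    (integrable_sub_apply_mul_exp_neg_quad hC i) ((integrable_exp_neg_quad hC).const_mul _)
    (integrable_sub_apply_mul_sub_apply_mul_exp_neg_quad hC i j), integral_const_mul]

theorem integral_apply_mul_apply_sub_mul_exp_neg_quad (hC : C.PosDef) (i j : Fin d) :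
    ∫ x, (x i * x j - (C i j + m i * m j)) * Real.exp (-quad m C x) = 0 := by
  have hconst := (integrable_exp_neg_quad (m := m) hC).const_mul (C i j)
  have hlin := fun k l =>
    (integrable_sub_apply_mul_exp_neg_quad (m := m) hC k).const_mul (m l)
  have hquad := integrable_sub_apply_mul_sub_apply_mul_exp_neg_quad (m := m) hC i j
  have hcentered : Integrable fun x =>
      (x i - m i) * (x j - m j) * Real.exp (-quad m C x) - C i j * Real.exp (-quad m C x) :=
    hquad.sub hconst
  have hmixed : Integrable fun x =>
      m j * ((x i - m i) * Real.exp (-quad m C x)) + m i * ((x j - m j) * Real.exp (-quad m C x)) :=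
    (hlin i j).add (hlin j i)
  calc ∫ x, (x i * x j - (C i j + m i * m j)) * Real.exp (-quad m C x)
      = ∫ x, ((x i - m i) * (x j - m j) * Real.exp (-quad m C x)
          - C i j * Real.exp (-quad m C x)) + (m j * ((x i - m i) * Real.exp (-quad m C x))
          + m i * ((x j - m j) * Real.exp (-quad m C x))) := by
        congr 1 with x; ring
    _ = 0 := by
        rw [integral_add hcentered hmixed, integral_sub hquad hconst,
          integral_add (hlin i j) (hlin j i), integral_sub_apply_mul_sub_apply_mul_exp_neg_quad hC]
        simp only [integral_const_mul, integral_sub_apply_mul_exp_neg_quad hC, sub_self,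
          mul_zero, add_zero]

theorem abs_apply_le_inv (hC : C.PosDef) {b : ℝ} (hb : 0 < b)
    (hbC : ∀ y : Fin d → ℝ, b * (y ⬝ᵥ y) ≤ y ⬝ᵥ (C⁻¹ *ᵥ y)) (i j : Fin d) :
    |C i j| ≤ b⁻¹ := by
  have hcol : b * (C.col j ⬝ᵥ C.col j) ≤ C j j := by
    have h := hbC (C.col j)
    rwa [← mulVec_single_one C j, mulVec_mulVec, nonsing_inv_mul _ hC.det_pos.ne'.isUnit,
      one_mulVec, dotProduct_single_one, mulVec_single_one] at h
  have hsq : ∀ k, b * C k j ^ 2 ≤ C j j := fun k =>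
    (mul_le_mul_of_nonneg_left (sq_apply_le_dotProduct_self (C.col j) k) hb.le).trans hcol
  have hdiag : b * C j j ≤ 1 := by
    have := hsq j
    have : 0 < C j j := hC.diag_pos
    nlinarith
  have : |b * C i j| ≤ 1 := (sq_le_one_iff_abs_le_one _).mp <| by
    linarith [mul_le_mul_of_nonneg_left (hsq i) hb.le, mul_pow b (C i j) 2]
  rwa [abs_mul, abs_of_pos hb, ← le_inv_mul_iff₀ hb, mul_one] at this

end GaussianMoments

section Perturbation

theorem abs_exp_sub_exp_le {u v w : ℝ} (hu : u ≤ w) (hv : v ≤ w) :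
    |Real.exp u - Real.exp v| ≤ |u - v| * Real.exp w := by
  wlog huv : v ≤ u generalizing u v
  · rw [abs_sub_comm, abs_sub_comm u v]
    exact this hv hu (le_of_not_ge huv)
  rw [abs_of_nonneg (sub_nonneg.mpr (Real.exp_le_exp.mpr huv)), abs_of_nonneg (sub_nonneg.mpr huv)]
  calc Real.exp u - Real.exp v = (1 - Real.exp (v - u)) * Real.exp u := by
        rw [sub_mul, one_mul, ← Real.exp_add, sub_add_cancel]
    _ ≤ (u - v) * Real.exp u :=
        mul_le_mul_of_nonneg_right (by linarith [Real.add_one_le_exp (v - u)]) (Real.exp_nonneg u)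
    _ ≤ (u - v) * Real.exp w := by gcongr

theorem abs_integral_mul_div_sub_le {X : Type*} [MeasurableSpace X] {μ : Measure X}
    {f w w₀ g : X → ℝ} {a z : ℝ} (hw : Integrable w μ) (hfw : Integrable (fun x => f x * w x) μ)
    (hfw₀ : Integrable (fun x => (f x - a) * w₀ x) μ) (h₀ : ∫ x, (f x - a) * w₀ x ∂μ = 0)
    (hg : Integrable g μ) (hbound : ∀ x, |(f x - a) * (w x - w₀ x)| ≤ g x)
    (hz : 0 < z) (hzw : z ≤ ∫ x, w x ∂μ) :
    |(∫ x, f x * (w x / ∫ x, w x ∂μ) ∂μ) - a| ≤ (∫ x, g x ∂μ) / z := by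
  have hZ : 0 < ∫ x, w x ∂μ := hz.trans_le hzw
  have hfaw : Integrable (fun x => (f x - a) * w x) μ := by
    simp only [sub_mul]
    exact hfw.sub (hw.const_mul a)
  have hdiff : ∫ x, (f x - a) * (w x - w₀ x) ∂μ = (∫ x, f x * w x ∂μ) - a * ∫ x, w x ∂μ := by
    simp only [mul_sub]
    rw [integral_sub hfaw hfw₀, h₀, sub_zero]
    simp only [sub_mul]
    rw [integral_sub hfw (hw.const_mul a), integral_const_mul]
  have hratio : (∫ x, f x * (w x / ∫ x, w x ∂μ) ∂μ) - a
      = (∫ x, (f x - a) * (w x - w₀ x) ∂μ) / ∫ x, w x ∂μ := by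
    simp only [← mul_div_assoc, integral_div]
    rw [hdiff]
    field_simp
  have hnum : |∫ x, (f x - a) * (w x - w₀ x) ∂μ| ≤ ∫ x, g x ∂μ := by
    rw [← Real.norm_eq_abs]
    exact norm_integral_le_of_norm_le hg (ae_of_all _ hbound)
  rw [hratio, abs_div, abs_of_pos hZ]
  exact div_le_div₀ ((abs_nonneg _).trans hnum) hnum hz hzw

variable {d : ℕ} {m : Fin d → ℝ} {C : Matrix (Fin d) (Fin d) ℝ} {H : (Fin d → ℝ) → ℝ}
  {εbar ε B τ : ℝ}

theorem measurable_weight (hH : Measurable H) : Measurable (weight m C H ε) :=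
  Real.measurable_exp.comp (continuous_quad.measurable.neg.sub (hH.const_mul ε))

theorem abs_mul_le_add_mul_quad (hε : ε ∈ Set.Icc 0 εbar)
    (hH : ∀ x, εbar * |H x| ≤ B + τ * quad m C x) (x : Fin d → ℝ) :
    |ε * H x| ≤ B + τ * quad m C x := by
  rw [abs_mul, abs_of_nonneg hε.1]
  exact (mul_le_mul_of_nonneg_right hε.2 (abs_nonneg _)).trans (hH x)

theorem weight_le (hε : ε ∈ Set.Icc 0 εbar) (hH : ∀ x, εbar * |H x| ≤ B + τ * quad m C x)
    (x : Fin d → ℝ) :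
    weight m C H ε x ≤ Real.exp B * Real.exp (-((1 - τ) * quad m C x)) := by
  rw [← Real.exp_add, weight, Real.exp_le_exp]
  linarith [(abs_le.mp (abs_mul_le_add_mul_quad hε hH x)).1]

theorem le_weight (hε : ε ∈ Set.Icc 0 εbar) (hH : ∀ x, εbar * |H x| ≤ B + τ * quad m C x)
    (x : Fin d → ℝ) :
    Real.exp (-B) * Real.exp (-((1 + τ) * quad m C x)) ≤ weight m C H ε x := by
  rw [← Real.exp_add, weight, Real.exp_le_exp]
  linarith [(abs_le.mp (abs_mul_le_add_mul_quad hε hH x)).2]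

theorem abs_weight_sub_le (hε : ε ∈ Set.Icc 0 εbar)
    (hH : ∀ x, εbar * |H x| ≤ B + τ * quad m C x) (x : Fin d → ℝ) :
    |weight m C H ε x - Real.exp (-quad m C x)| ≤
      ε * |H x| * (Real.exp B * Real.exp (-((1 - τ) * quad m C x))) := by
  have hεH := abs_le.mp (abs_mul_le_add_mul_quad hε hH x)
  have h := abs_exp_sub_exp_le (u := -quad m C x - ε * H x) (v := -quad m C x)
    (w := B + -((1 - τ) * quad m C x)) (by linarith) (by linarith)
  rwa [Real.exp_add, sub_sub_cancel_left, abs_neg, abs_mul, abs_of_nonneg hε.1] at h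

theorem integrable_mul_weight (hC : C.PosDef) (hHm : Measurable H) (hε : ε ∈ Set.Icc 0 εbar)
    (hτ : τ < 1) (hH : ∀ x, εbar * |H x| ≤ B + τ * quad m C x) {f : (Fin d → ℝ) → ℝ}
    (hf : Measurable f) {D : ℝ} {n : ℕ} (hfD : ∀ x, |f x| ≤ D * (1 + quad m C x) ^ n) :
    Integrable fun x => f x * weight m C H ε x := by
  refine ((integrable_one_add_quad_pow_mul_exp (m := m) hC (sub_pos.mpr hτ) n).const_mul
    (D * Real.exp B)).mono' (hf.mul (measurable_weight hHm)).aestronglyMeasurable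
    (ae_of_all _ fun x => ?_)
  calc ‖f x * weight m C H ε x‖ = |f x| * weight m C H ε x := by
        rw [norm_mul, Real.norm_eq_abs, weight, Real.norm_eq_abs, Real.abs_exp]
    _ ≤ D * (1 + quad m C x) ^ n * (Real.exp B * Real.exp (-((1 - τ) * quad m C x))) :=
        mul_le_mul (hfD x) (weight_le hε hH x) (Real.exp_nonneg _)
          ((abs_nonneg _).trans (hfD x))
    _ = D * Real.exp B * ((1 + quad m C x) ^ n * Real.exp (-((1 - τ) * quad m C x))) := by ring

theorem integrable_weight (hC : C.PosDef) (hHm : Measurable H) (hε : ε ∈ Set.Icc 0 εbar)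
    (hτ : τ < 1) (hH : ∀ x, εbar * |H x| ≤ B + τ * quad m C x) :
    Integrable (weight m C H ε) := by
  simpa only [one_mul] using integrable_mul_weight hC hHm hε hτ hH (f := fun _ => 1)
    measurable_const (D := 1) (n := 0) (by simp)

theorem le_normConst (hC : C.PosDef) (hHm : Measurable H) (hε : ε ∈ Set.Icc 0 εbar)
    (hτ0 : 0 ≤ τ) (hτ : τ < 1) (hH : ∀ x, εbar * |H x| ≤ B + τ * quad m C x) :
    Real.exp (-B) * ((√(1 + τ) ^ d)⁻¹ * ∫ x, Real.exp (-quad m C x)) ≤ normConst m C H ε := by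
  have hθ : 0 < 1 + τ := by linarith
  rw [← integral_exp_neg_mul_quad hθ, ← integral_const_mul]
  exact integral_mono ((integrable_exp_neg_mul_quad hC hθ).const_mul _)
    (integrable_weight hC hHm hε hτ hH) (le_weight hε hH)

theorem abs_le_mul_one_add_quad (hC : C.PosDef) (hεbar : 0 < εbar) (hτ : τ ≤ 1)
    (hH : ∀ x, εbar * |H x| ≤ B + τ * quad m C x) (x : Fin d → ℝ) :
    |H x| ≤ (B + 1) / εbar * (1 + quad m C x) := by
  have hB : 0 ≤ B := by
    have h := (mul_nonneg hεbar.le (abs_nonneg _)).trans (hH m)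
    rwa [quad, sub_self, zero_dotProduct, mul_zero, mul_zero, add_zero] at h
  have hq := quad_nonneg (m := m) hC x
  rw [div_mul_eq_mul_div, le_div_iff₀ hεbar]
  nlinarith [hH x, mul_nonneg hB hq, mul_nonneg (sub_nonneg.mpr hτ) hq]

/-- The amplification of the perturbation `εH`, where `|εH| ≤ B + τQ`, in the expectation of a
function of growth `1 + Q`: the product of `exp (2B)`, an upper bound for
`∫ (1 + Q)² exp (-(1 - τ)Q)` and the reciprocal of `∫ exp (-(1 + τ)Q)`, both integrals being taken
relative to `∫ exp (-Q)`. -/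
noncomputable def tiltFactor (d : ℕ) (τ B : ℝ) : ℝ :=
  Real.exp (2 * B) * (2 * (2 / (1 - τ)) ^ 2 * Real.exp ((1 - τ) / 2)) *
    (√(1 + τ) ^ d / √((1 - τ) / 2) ^ d)

theorem tiltFactor_pos (hτ0 : 0 ≤ τ) (hτ : τ < 1) : 0 < tiltFactor d τ B := by
  have : 0 < 1 - τ := sub_pos.mpr hτ
  unfold tiltFactor
  positivity

theorem integrable_mul_weight_of_abs_sub_le (hC : C.PosDef) (hHm : Measurable H)
    (hε : ε ∈ Set.Icc 0 εbar) (hτ : τ < 1) (hH : ∀ x, εbar * |H x| ≤ B + τ * quad m C x)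
    {f : (Fin d → ℝ) → ℝ} (hf : Measurable f) {a D : ℝ}
    (hfD : ∀ x, |f x - a| ≤ D * (1 + quad m C x)) :
    Integrable fun x => f x * weight m C H ε x := by
  refine integrable_mul_weight hC hHm hε hτ hH hf (D := D + |a|) (n := 1) fun x => ?_
  have hq := mul_nonneg (abs_nonneg a) (quad_nonneg (m := m) hC x)
  have htri : |f x| ≤ |f x - a| + |a| := by simpa only [sub_add_cancel] using abs_add_le (f x - a) a
  linarith [hfD x]

theorem integrable_mul_density (hC : C.PosDef) (hHm : Measurable H) (hε : ε ∈ Set.Icc 0 εbar)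
    (hτ : τ < 1) (hH : ∀ x, εbar * |H x| ≤ B + τ * quad m C x) {f : (Fin d → ℝ) → ℝ}
    (hf : Measurable f) {a D : ℝ} (hfD : ∀ x, |f x - a| ≤ D * (1 + quad m C x)) :
    Integrable fun x => f x * density m C H ε x := by
  simpa only [density, mul_div_assoc] using
    (integrable_mul_weight_of_abs_sub_le hC hHm hε hτ hH hf hfD).div_const (normConst m C H ε)

theorem abs_sub_mul_weight_sub_le (hC : C.PosDef) (hεbar : 0 < εbar)
    (hε : ε ∈ Set.Icc 0 εbar) (hτ : τ ≤ 1) (hH : ∀ x, εbar * |H x| ≤ B + τ * quad m C x)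
    {f : (Fin d → ℝ) → ℝ} {a D : ℝ} (hfD : ∀ x, |f x - a| ≤ D * (1 + quad m C x))
    (x : Fin d → ℝ) :
    |(f x - a) * (weight m C H ε x - Real.exp (-quad m C x))| ≤
      D * ((B + 1) / εbar) * Real.exp B * ε *
        ((1 + quad m C x) ^ 2 * Real.exp (-((1 - τ) * quad m C x))) := by
  have hHx := abs_le_mul_one_add_quad hC hεbar hτ hH x
  have hw : |weight m C H ε x - Real.exp (-quad m C x)| ≤
      ε * ((B + 1) / εbar * (1 + quad m C x)) *
        (Real.exp B * Real.exp (-((1 - τ) * quad m C x))) :=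
    (abs_weight_sub_le hε hH x).trans <|
      mul_le_mul_of_nonneg_right (mul_le_mul_of_nonneg_left hHx hε.1) (by positivity)
  rw [abs_mul]
  refine (mul_le_mul (hfD x) hw (abs_nonneg _) ((abs_nonneg _).trans (hfD x))).trans_eq ?_
  ring

theorem abs_integral_mul_density_sub_le (hC : C.PosDef) (hHm : Measurable H) (hεbar : 0 < εbar)
    (hε : ε ∈ Set.Icc 0 εbar) (hτ0 : 0 ≤ τ) (hτ : τ < 1)
    (hH : ∀ x, εbar * |H x| ≤ B + τ * quad m C x) {f : (Fin d → ℝ) → ℝ} (hf : Continuous f)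
    {a D : ℝ} (hfD : ∀ x, |f x - a| ≤ D * (1 + quad m C x))
    (hfa : ∫ x, (f x - a) * Real.exp (-quad m C x) = 0) :
    |(∫ x, f x * density m C H ε x) - a| ≤ D * ((B + 1) / εbar) * tiltFactor d τ B * ε := by
  have hθ : 0 < 1 - τ := sub_pos.mpr hτ
  have hZ₀ := integral_exp_neg_quad_pos (m := m) hC
  have hratio := abs_integral_mul_div_sub_le (integrable_weight hC hHm hε hτ hH)
    (integrable_mul_weight_of_abs_sub_le hC hHm hε hτ hH hf.measurable hfD)
    (integrable_mul_exp_neg_quad hC (hf.sub continuous_const) (n := 1)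
      (by simpa only [pow_one] using hfD)) hfa
    ((integrable_one_add_quad_pow_mul_exp (m := m) hC hθ 2).const_mul
      (D * ((B + 1) / εbar) * Real.exp B * ε))
    (abs_sub_mul_weight_sub_le hC hεbar hε hτ.le hH hfD) (by positivity)
    (le_normConst hC hHm hε hτ0 hτ hH)
  have hκ : 0 ≤ D * ((B + 1) / εbar) * Real.exp B * ε :=
    nonneg_of_mul_nonneg_left
      ((abs_nonneg _).trans (abs_sub_mul_weight_sub_le hC hεbar hε hτ.le hH hfD m))
      (mul_pos (pow_pos (by linarith [quad_nonneg (m := m) hC m]) 2) (Real.exp_pos _))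
  refine hratio.trans ?_
  rw [integral_const_mul]
  calc _ ≤ D * ((B + 1) / εbar) * Real.exp B * ε *
        ((2).factorial * (2 / (1 - τ)) ^ 2 * Real.exp ((1 - τ) / 2) * (√((1 - τ) / 2) ^ d)⁻¹ *
          ∫ x, Real.exp (-quad m C x)) /
        (Real.exp (-B) * ((√(1 + τ) ^ d)⁻¹ * ∫ x, Real.exp (-quad m C x))) := by
        gcongr
        exact integral_one_add_quad_pow_mul_exp_le hC hθ 2
    _ = D * ((B + 1) / εbar) * tiltFactor d τ B * ε := by
        rw [tiltFactor, two_mul B, Real.exp_add, Real.exp_neg, Nat.factorial_two, Nat.cast_two]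
        field_simp

end Perturbation

section Moments

variable {d : ℕ} {m : Fin d → ℝ} {C : Matrix (Fin d) (Fin d) ℝ} {H : (Fin d → ℝ) → ℝ}
  {b M : ℝ}

theorem mul_abs_le_add_mul_quad {c c0 c1 δ : ℝ} (hb : 0 < b)
    (hbC : ∀ y : Fin d → ℝ, b * (y ⬝ᵥ y) ≤ y ⬝ᵥ (C⁻¹ *ᵥ y)) (hm : ∀ i, |m i| ≤ M)
    (hc : 0 ≤ c) (hc0 : 0 ≤ c0) (hδ : 0 < δ) (hH : ∀ x, |H x| ≤ c0 * (x ⬝ᵥ x) + c1)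
    (x : Fin d → ℝ) :
    c * |H x| ≤ c * (c0 * ((1 + δ⁻¹) * (d * M ^ 2)) + c1)
      + 2 * c * c0 * (1 + δ) / b * quad m C x := by
  have hq : (x - m) ⬝ᵥ (x - m) ≤ 2 / b * quad m C x := by
    rw [div_mul_eq_mul_div, le_div_iff₀ hb]
    linarith [half_mul_dotProduct_self_le_quad (m := m) hbC x]
  have hyoung := dotProduct_self_add_le (x - m) m hδ
  rw [sub_add_cancel] at hyoung
  have hmM : m ⬝ᵥ m ≤ d * M ^ 2 := by
    simpa only [Fintype.card_fin] using dotProduct_self_le_card_mul_sq hm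
  calc c * |H x|
      ≤ c * (c0 * ((1 + δ) * (2 / b * quad m C x) + (1 + δ⁻¹) * (d * M ^ 2)) + c1) := by
        gcongr
        refine (hH x).trans ?_
        gcongr
        exact hyoung.trans (by gcongr)
    _ = _ := by ring

theorem exists_mul_abs_le_add_mul_quad {c c0 c1 : ℝ} (hc : 0 < c) (hc0 : 0 < c0) (hc1 : 0 ≤ c1)
    (hb : 2 * c * c0 < b) (d : ℕ) (M : ℝ) :
    ∃ B τ : ℝ, 0 ≤ B ∧ 0 ≤ τ ∧ τ < 1 ∧
      ∀ {m : Fin d → ℝ} {C : Matrix (Fin d) (Fin d) ℝ} {H : (Fin d → ℝ) → ℝ}, (∀ i, |m i| ≤ M) →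
        (∀ y : Fin d → ℝ, b * (y ⬝ᵥ y) ≤ y ⬝ᵥ (C⁻¹ *ᵥ y)) →
        (∀ x, |H x| ≤ c0 * (x ⬝ᵥ x) + c1) → ∀ x, c * |H x| ≤ B + τ * quad m C x := by
  have hb0 : 0 < b := lt_trans (by positivity) hb
  set δ := (b - 2 * c * c0) / (4 * c * c0) with hδdef
  have hδ : 0 < δ := div_pos (sub_pos.mpr hb) (by positivity)
  refine ⟨c * (c0 * ((1 + δ⁻¹) * (d * M ^ 2)) + c1), 2 * c * c0 * (1 + δ) / b, by positivity,
    by positivity, ?_, fun hm hbC hH => mul_abs_le_add_mul_quad hb0 hbC hm hc.le hc0.le hδ hH⟩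
  have hmid : 2 * c * c0 * (1 + δ) = (b + 2 * c * c0) / 2 := by
    rw [hδdef]
    field_simp
    ring
  rw [hmid, div_lt_one hb0]
  linarith

theorem abs_apply_mul_apply_sub_le (hC : C.PosDef) (hb : 0 < b)
    (hbC : ∀ y : Fin d → ℝ, b * (y ⬝ᵥ y) ≤ y ⬝ᵥ (C⁻¹ *ᵥ y)) (hm : ∀ i, |m i| ≤ M)
    (x : Fin d → ℝ) (i j : Fin d) :
    |x i * x j - (C i j + m i * m j)| ≤
      (1 + 2 * M + b⁻¹) * (1 + 2 / b) * (1 + quad m C x) := by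
  set E := (1 + 2 / b) * (1 + quad m C x)
  have hE : 1 ≤ E := by
    linarith [one_add_dotProduct_self_le (m := m) hb hbC x, dotProduct_self_nonneg (x - m)]
  have hM : 0 ≤ M := (abs_nonneg _).trans (hm i)
  have hlin : ∀ k l, |m k * (x l - m l)| ≤ M * E := fun k l => by
    rw [abs_mul]
    exact mul_le_mul (hm k) (abs_sub_apply_le hb hbC x l) (abs_nonneg _) hM
  have hCE : |C i j| ≤ b⁻¹ * E :=
    (abs_apply_le_inv hC hb hbC i j).trans (le_mul_of_one_le_right (by positivity) hE)
  calc |x i * x j - (C i j + m i * m j)|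
      = |(x i - m i) * (x j - m j) + m i * (x j - m j) + m j * (x i - m i) - C i j| := by ring_nf
    _ ≤ |(x i - m i) * (x j - m j)| + |m i * (x j - m j)| + |m j * (x i - m i)| + |C i j| := by
        grw [abs_sub, abs_add_three]
    _ ≤ E + M * E + M * E + b⁻¹ * E := by
        gcongr
        exacts [abs_sub_apply_mul_sub_apply_le hb hbC x i j, hlin i j, hlin j i]
    _ = (1 + 2 * M + b⁻¹) * (1 + 2 / b) * (1 + quad m C x) := by ring

end Moments

end PerturbedGaussian

open PerturbedGaussian in
theorem perturbed_gaussian_moments_general (d : ℕ) (c0 c1 M εbar η : ℝ)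
    (hc0 : 0 < c0) (hc1 : 0 < c1) (hM : 0 < M) (hεbar : 0 < εbar) (hη : 0 < η) :
    ∃ K : ℝ, 0 < K ∧
      ∀ (m : Fin d → ℝ) (C : Matrix (Fin d) (Fin d) ℝ) (H : (Fin d → ℝ) → ℝ),
        (∀ i, |m i| ≤ M) →
        C.PosDef →
        2 * εbar * c0 + η ≤ lambdaMin C⁻¹ →
        Measurable H →
        (∀ x, |H x| ≤ c0 * (x ⬝ᵥ x) + c1) →
        ∀ ε ∈ Set.Icc (0 : ℝ) εbar,
          (Integrable (weight m C H ε) ∧ 0 < normConst m C H ε) ∧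
          ((∀ i, Integrable fun x : Fin d → ℝ => x i * density m C H ε x) ∧
            ∀ i, |(∫ x : Fin d → ℝ, x i * density m C H ε x) - m i| ≤ K * ε) ∧
          ((∀ i j, Integrable fun x : Fin d → ℝ => x i * x j * density m C H ε x) ∧
            ∀ i j, |(∫ x : Fin d → ℝ, x i * x j * density m C H ε x) - (C i j + m i * m j)|
              ≤ K * ε) := by
  set b := 2 * εbar * c0 + η
  have hb : 0 < b := by positivity
  obtain ⟨B, τ, hB, hτ0, hτ1, htilt⟩ := exists_mul_abs_le_add_mul_quad hεbar hc0 hc1.le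
    (lt_add_of_pos_right _ hη : _ < b) d M
  set D := (1 + 2 * M + b⁻¹) * (1 + 2 / b)
  have hD : 1 + 2 / b ≤ D :=
    le_mul_of_one_le_left (by positivity) (by linarith [inv_pos.mpr hb])
  refine ⟨D * ((B + 1) / εbar) * tiltFactor d τ B,
    mul_pos (by positivity) (tiltFactor_pos hτ0 hτ1), fun m C H hm hC hlam hHm hH ε hε => ?_⟩
  have hbC : ∀ y : Fin d → ℝ, b * (y ⬝ᵥ y) ≤ y ⬝ᵥ (C⁻¹ *ᵥ y) := fun y =>
    (mul_le_mul_of_nonneg_right hlam (dotProduct_self_nonneg y)).trans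
      (lambdaMin_mul_dotProduct_self_le hC.inv.isHermitian y)
  have hHq := htilt hm hbC hH
  have hmean : ∀ i x, |x i - m i| ≤ D * (1 + quad m C x) := fun i x =>
    (abs_sub_apply_le hb hbC x i).trans <|
      mul_le_mul_of_nonneg_right hD (add_nonneg zero_le_one (quad_nonneg hC x))
  have hsecond := fun i j x => abs_apply_mul_apply_sub_le hC hb hbC hm x i j
  have hw := integrable_weight hC hHm hε hτ1 hHq
  exact ⟨⟨hw, integral_exp_pos hw⟩,
    ⟨fun i => integrable_mul_density hC hHm hε hτ1 hHq (measurable_pi_apply i) (hmean i),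
      fun i => abs_integral_mul_density_sub_le hC hHm hεbar hε hτ0 hτ1 hHq
        (continuous_apply i) (hmean i) (integral_sub_apply_mul_exp_neg_quad hC i)⟩,
    fun i j => integrable_mul_density hC hHm hε hτ1 hHq (by fun_prop) (hsecond i j),
    fun i j => abs_integral_mul_density_sub_le hC hHm hεbar hε hτ0 hτ1 hHq (by fun_prop)
      (hsecond i j) (integral_apply_mul_apply_sub_mul_exp_neg_quad hC i j)⟩

/-- Perturbed Gaussian moments. The constant `K` depends only on `d, c₀, c₁, M, ε̄` and on a
positive lower bound `η` for the gap `λ_min(Ĉ⁻¹) - 2 ε̄ c₀`. The norm `‖·‖_∞` of a vector or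
matrix is the largest absolute value of an entry, so bounds on it are stated entrywise. -/
theorem perturbed_gaussian_moments (d : ℕ) (c0 c1 M εbar η : ℝ)
    (hc0 : 0 < c0) (hc1 : 0 < c1) (hM : 0 < M) (hεbar : 0 < εbar) (hη : 0 < η) :
    ∃ K : ℝ, 0 < K ∧
      ∀ (m : Fin d → ℝ) (C : Matrix (Fin d) (Fin d) ℝ) (H : (Fin d → ℝ) → ℝ),
        (∀ i, |m i| ≤ M) →
        C.PosDef →
        (∀ i j, |C i j| ≤ M) →
        (∀ i j, |C⁻¹ i j| ≤ M) →
        2 * εbar * c0 + η ≤ PerturbedGaussian.lambdaMin C⁻¹ →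
        Measurable H →
        (∀ x, |H x| ≤ c0 * (x ⬝ᵥ x) + c1) →
        ∀ ε ∈ Set.Icc (0 : ℝ) εbar,
          (Integrable (PerturbedGaussian.weight m C H ε) ∧
            0 < PerturbedGaussian.normConst m C H ε) ∧
          ((∀ i, Integrable fun x : Fin d → ℝ => x i * PerturbedGaussian.density m C H ε x) ∧
            ∀ i, |(∫ x : Fin d → ℝ, x i * PerturbedGaussian.density m C H ε x) - m i|
              ≤ K * ε) ∧
          ((∀ i j, Integrable fun x : Fin d → ℝ =>
              x i * x j * PerturbedGaussian.density m C H ε x) ∧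
            ∀ i j, |(∫ x : Fin d → ℝ, x i * x j * PerturbedGaussian.density m C H ε x)
              - (C i j + m i * m j)| ≤ K * ε) := by
  obtain ⟨K, hK, h⟩ := perturbed_gaussian_moments_general d c0 c1 M εbar η hc0 hc1 hM hεbar hη
  exact ⟨K, hK, fun m C H hm hC _ _ => h m C H hm hC⟩
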